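/- arXiv:1205.5322 — 2 statements merged into one kernel-verified Lean document; each statement's English description precedes it below -/
import Mathlib

section
/- Let 0 < α < 1 and let ψ : ℝ → ℝ be a 2π-periodic continuously differentiable function whose derivative ψ′ is α-Hölder continuous. Let Φ be continuous on the closed unit disk in ℝ², harmonic on the open unit disk D, and satisfy Φ(cos θ, sin θ) = ψ(θ) for all θ ∈ ℝ. Then there is a constant C > 0, depending only on α, ‖ψ‖_∞, ‖ψ′‖_∞ and the α-Hölder seminorm of ψ′, such that ‖∇Φ(x)‖ ≤ C for every x ∈ D; in particular the gradient of the harmonic extension of C^{1,α} boundary data is uniformly bounded on the disk. -/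
open scoped BigOperators

/-- The Laplacian of a scalar function on `ℝ²`, `ΔΦ = Σᵢ ∂²Φ/∂xᵢ²`. -/
noncomputable def laplacian2 (f : EuclideanSpace ℝ (Fin 2) → ℝ)
    (x : EuclideanSpace ℝ (Fin 2)) : ℝ :=
  ∑ i : Fin 2,
    fderiv ℝ (fun y => fderiv ℝ f y (EuclideanSpace.single i 1)) x (EuclideanSpace.single i 1)

/-- The point `(cos θ, sin θ)` of the unit circle in `ℝ²`. -/
noncomputable def circlePoint (θ : ℝ) : EuclideanSpace ℝ (Fin 2) :=
  (EuclideanSpace.equiv (Fin 2) ℝ).symm ![Real.cos θ, Real.sin θ]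

/-!
Identify the plane with `ℂ`. Differentiating the Herglotz form of the Poisson integral, the
conjugate of the gradient of `Φ` at `w` is the circle average of `2 ζ / (ζ - w) ^ 2` against the
boundary values. Along the circle that kernel is, up to a constant factor, the angular derivative
of `1 / (ζ - w)`, so an integration by parts puts one derivative on `ψ`. Since `1 / (ζ - w)` has
circle average zero, `ψ′(φ + t)` may be replaced by `ψ′(φ + t) - ψ′(φ)`, where `φ` is the argument
of `w`; this is at most `M |t| ^ α` by Hölder continuity. The boundary point at angle `φ` is the
nearest one to `w`, so `|ζ - w|` is at least `|t| / π` at angle `φ + t`. The integrand is thus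
`O(|t| ^ (α - 1))` uniformly in `w`, and this is integrable on `[-π, π]`.
-/

open Complex InnerProductSpace MeasureTheory Metric
open Real (circleAverage)
open scoped Gradient Topology

theorem intervalIntegrable_abs_rpow {p : ℝ} (hp : -1 < p) (a b : ℝ) :
    IntervalIntegrable (fun t : ℝ ↦ |t| ^ p) volume a b := by
  suffices ∀ b : ℝ, IntervalIntegrable (fun t : ℝ ↦ |t| ^ p) volume 0 b from
    (this a).symm.trans (this b)
  have of_nonneg {b : ℝ} (hb : 0 ≤ b) : IntervalIntegrable (fun t : ℝ ↦ |t| ^ p) volume 0 b := by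
    refine (intervalIntegral.intervalIntegrable_rpow' hp).congr fun t ht ↦ ?_
    rw [Set.uIoc_of_le hb] at ht
    simp only [abs_of_pos ht.1]
  intro b
  rcases le_total 0 b with hb | hb
  · exact of_nonneg hb
  · simpa using (IntervalIntegrable.iff_comp_neg (a := 0) (b := -b)).1 (of_nonneg (neg_nonneg.2 hb))

theorem integral_abs_rpow_neg_self {p b : ℝ} (hp : -1 < p) (hb : 0 ≤ b) :
    ∫ t in -b..b, |t| ^ p = 2 * (b ^ (p + 1) / (p + 1)) := by
  have right : ∫ t in (0 : ℝ)..b, |t| ^ p = b ^ (p + 1) / (p + 1) := by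
    calc ∫ t in (0 : ℝ)..b, |t| ^ p
      _ = ∫ t in (0 : ℝ)..b, t ^ p := by
        refine intervalIntegral.integral_congr fun t ht ↦ ?_
        rw [Set.uIcc_of_le hb] at ht
        simp only [abs_of_nonneg ht.1]
      _ = b ^ (p + 1) / (p + 1) := by
        rw [integral_rpow (Or.inl hp), Real.zero_rpow (by linarith), sub_zero]
  have left : ∫ t in -b..0, |t| ^ p = ∫ t in (0 : ℝ)..b, |t| ^ p := by
    simpa using (intervalIntegral.integral_comp_neg (a := 0) (b := b) fun t ↦ |t| ^ p).symm
  rw [← intervalIntegral.integral_add_adjacent_intervals (intervalIntegrable_abs_rpow hp _ 0)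
    (intervalIntegrable_abs_rpow hp 0 _), left, right, two_mul]

theorem continuous_of_dist_le_mul_rpow {X Y : Type*} [PseudoMetricSpace X] [PseudoMetricSpace Y]
    {g : X → Y} {M α : ℝ} (hα : 0 < α) (hg : ∀ s t, dist (g s) (g t) ≤ M * dist s t ^ α) :
    Continuous g := by
  refine continuous_iff_continuousAt.2 fun t ↦ tendsto_iff_dist_tendsto_zero.2 ?_
  have hlim : Filter.Tendsto (fun s ↦ M * dist s t ^ α) (𝓝 t) (𝓝 0) := by
    have hrpow : Continuous fun s ↦ dist s t ^ α :=
      (continuous_id.dist continuous_const).rpow_const fun _ ↦ Or.inr hα.le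
    simpa [Real.zero_rpow hα.ne'] using (hrpow.tendsto t).const_mul M
  exact squeeze_zero (fun _ ↦ dist_nonneg) (fun s ↦ hg s t) hlim

section CircleMap

variable {c w : ℂ} {R : ℝ}

theorem norm_circleMap_sub_circleMap (c : ℂ) (R s t : ℝ) :
    ‖circleMap c R s - circleMap c R t‖ = 2 * |R| * |Real.sin ((s - t) / 2)| := by
  have factor : circleMap c R s - circleMap c R t
      = (cexp (I * (s - t : ℝ)) - 1) * circleMap 0 R t := by
    rw [circleMap_zero, sub_one_mul, mul_left_comm, ← Complex.exp_add]
    simp only [circleMap]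
    push_cast
    ring_nf
  rw [factor, norm_mul, norm_exp_I_mul_ofReal_sub_one, norm_circleMap_zero, norm_mul,
    Real.norm_ofNat, Real.norm_eq_abs]
  ring

theorem norm_circleMap_arg_sub (hw : w ∈ closedBall c R) :
    ‖circleMap c R (arg (w - c)) - w‖ = R - ‖w - c‖ := by
  have hwR : ‖w - c‖ ≤ R := mem_closedBall_iff_norm.1 hw
  have key : circleMap c R (arg (w - c)) - w
      = (R - ‖w - c‖ : ℝ) * cexp (arg (w - c) * I) := by
    have polar := norm_mul_exp_arg_mul_I (w - c)
    rw [circleMap]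
    push_cast
    linear_combination polar
  rw [key, norm_mul, norm_exp_ofReal_mul_I, mul_one, norm_real,
    Real.norm_of_nonneg (sub_nonneg.2 hwR)]

theorem mul_abs_le_pi_mul_norm_circleMap_arg_add_sub (hw : w ∈ closedBall c R) {t : ℝ}
    (ht : |t| ≤ Real.pi) :
    R * |t| ≤ Real.pi * ‖circleMap c R (arg (w - c) + t) - w‖ := by
  have hR : 0 ≤ R := nonempty_closedBall.1 ⟨w, hw⟩
  set u := circleMap c R (arg (w - c))
  set ζ := circleMap c R (arg (w - c) + t)
  have hζ : ‖ζ - c‖ = R := by rw [circleMap_sub_center, norm_circleMap_zero, abs_of_nonneg hR]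
  have nearest : ‖u - w‖ ≤ ‖ζ - w‖ := by
    have := norm_sub_norm_le (ζ - c) (w - c)
    rwa [hζ, sub_sub_sub_cancel_right, ← norm_circleMap_arg_sub hw] at this
  have chord : ‖ζ - u‖ = 2 * R * |Real.sin (t / 2)| := by
    rw [norm_circleMap_sub_circleMap, add_sub_cancel_left, abs_of_nonneg hR]
  have jordan : |t| / Real.pi ≤ |Real.sin (t / 2)| := by
    have := Real.mul_abs_le_abs_sin (x := t / 2) (by rw [abs_div, abs_two]; linarith)
    rw [abs_div, abs_two] at this
    linarith [show 2 / Real.pi * (|t| / 2) = |t| / Real.pi by ring]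
  calc R * |t| = Real.pi * (R * (|t| / Real.pi)) := by field_simp
    _ ≤ Real.pi * (R * |Real.sin (t / 2)|) := by gcongr
    _ = Real.pi * (‖ζ - u‖ / 2) := by rw [chord]; ring
    _ ≤ Real.pi * ((‖ζ - w‖ + ‖u - w‖) / 2) := by
      gcongr
      simpa using norm_sub_le (ζ - w) (u - w)
    _ ≤ Real.pi * ‖ζ - w‖ := by gcongr; linarith

end CircleMap

section CircleAverage

theorem circleAverage_eq_integral_neg_pi_pi {E : Type*} [NormedAddCommGroup E] [NormedSpace ℝ E]
    (f : ℂ → E) (c : ℂ) (R φ : ℝ) :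
    circleAverage f c R
      = (2 * Real.pi)⁻¹ • ∫ t in -Real.pi..Real.pi, f (circleMap c R (φ + t)) := by
  rw [Real.circleAverage_eq_integral_add (φ - Real.pi),
    intervalIntegral.integral_comp_add_right fun θ ↦ f (circleMap c R θ),
    intervalIntegral.integral_comp_add_left fun θ ↦ f (circleMap c R θ)]
  ring_nf

variable {E : Type*} [NormedAddCommGroup E] [NormedSpace ℂ E] {c w : ℂ} {R : ℝ}

theorem continuous_inv_circleMap_sub (hw : w ∈ ball c R) :
    Continuous fun θ ↦ (circleMap c R θ - w)⁻¹ :=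
  ((continuous_circleMap c R).sub continuous_const).inv₀
    fun θ ↦ sub_ne_zero.2 (circleMap_ne_mem_ball hw θ)

theorem circleAverage_inv_sub_eq_zero (hw : w ∈ ball c R) :
    circleAverage (fun ζ ↦ (ζ - w)⁻¹) c R = 0 := by
  have hR : 0 < R := pos_of_mem_ball hw
  rcases eq_or_ne w c with rfl | hwc
  · calc circleAverage (fun ζ ↦ (ζ - w)⁻¹) w R
      _ = (2 * Real.pi * I)⁻¹ • ∮ ζ in C(w, R), (ζ - w) ^ (-2 : ℤ) := by
        rw [Real.circleAverage_eq_circleIntegral hR.ne']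
        congr 2 with ζ
        rw [smul_eq_mul, ← mul_inv, ← sq]
        rfl
      _ = 0 := by rw [circleIntegral.integral_sub_zpow_of_ne (by decide), smul_zero]
  · have mean : circleAverage (fun ζ ↦ (ζ - c) / (ζ - w)) c R = 1 := by
      simpa using (diffContOnCl_const (c := (1 : ℂ))).circleAverage_smul_div
        (by rwa [abs_of_pos hR])
    have hint : CircleIntegrable (fun ζ ↦ (ζ - c) / (ζ - w)) c R :=
      (((continuous_circleMap c R).sub continuous_const).mul
        (continuous_inv_circleMap_sub hw)).intervalIntegrable _ _
    calc circleAverage (fun ζ ↦ (ζ - w)⁻¹) c R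
      _ = circleAverage (fun ζ ↦ (w - c)⁻¹ • ((ζ - c) / (ζ - w) - 1)) c R := by
        refine Real.circleAverage_congr_sphere fun ζ hζ ↦ ?_
        have hζw : ζ - w ≠ 0 := by
          intro h
          rw [abs_of_pos hR, sub_eq_zero.1 h] at hζ
          exact (mem_ball.1 hw).ne hζ
        have hwc' : w - c ≠ 0 := sub_ne_zero.2 hwc
        simp only [smul_eq_mul]
        field_simp
        ring
      _ = 0 := by
        rw [Real.circleAverage_fun_smul,
          Real.circleAverage_fun_sub hint (circleIntegrable_const 1 c R), mean,
          Real.circleAverage_const, sub_self, smul_zero]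

theorem hasDerivAt_inv_circleMap_sub (hw : w ∈ ball c R) (θ : ℝ) :
    HasDerivAt (fun θ ↦ (circleMap c R θ - w)⁻¹)
      (-(I * ((circleMap c R θ - c) / (circleMap c R θ - w) ^ 2))) θ := by
  refine (((hasDerivAt_circleMap c R θ).sub_const w).fun_inv
    (sub_ne_zero.2 (circleMap_ne_mem_ball hw θ))).congr_deriv ?_
  rw [circleMap_sub_center]
  ring

theorem integral_inv_circleMap_sub_smul_deriv [CompleteSpace E] {f : ℂ → E} {f' : ℝ → E}
    (hw : w ∈ ball c R) (hf : ∀ θ, HasDerivAt (fun θ ↦ f (circleMap c R θ)) (f' θ) θ)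
    (hf' : Continuous f') (φ : ℝ) :
    ∫ t in -Real.pi..Real.pi, (circleMap c R (φ + t) - w)⁻¹ • f' (φ + t)
      = (Real.pi * I) • circleAverage (fun ζ ↦ (2 * (ζ - c) / (ζ - w) ^ 2) • f ζ) c R := by
  have hu' : Continuous fun θ ↦ -(I * ((circleMap c R θ - c) / (circleMap c R θ - w) ^ 2)) :=
    (continuous_const.mul (((continuous_circleMap c R).sub continuous_const).div
      (((continuous_circleMap c R).sub continuous_const).pow 2)
      fun θ ↦ pow_ne_zero 2 (sub_ne_zero.2 (circleMap_ne_mem_ball hw θ)))).neg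
  have hfc : Continuous fun θ ↦ f (circleMap c R θ) :=
    continuous_iff_continuousAt.2 fun θ ↦ (hf θ).continuousAt
  have hshift : Continuous fun t : ℝ ↦ φ + t := continuous_const.add continuous_id
  have endpoints : circleMap c R (φ + Real.pi) = circleMap c R (φ + -Real.pi) := by
    rw [← periodic_circleMap c R (φ + -Real.pi)]
    ring_nf
  have parts := intervalIntegral.integral_smul_deriv_eq_deriv_smul_of_hasDerivAt
    (a := -Real.pi) (b := Real.pi) (u := fun t ↦ (circleMap c R (φ + t) - w)⁻¹)
    (v := fun t ↦ f (circleMap c R (φ + t)))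
    ((continuous_inv_circleMap_sub hw).comp hshift).continuousOn (hfc.comp hshift).continuousOn
    (fun t _ ↦ (hasDerivAt_inv_circleMap_sub hw (φ + t)).comp_const_add φ t)
    (fun t _ ↦ (hf (φ + t)).comp_const_add φ t)
    ((hu'.comp hshift).intervalIntegrable _ _) ((hf'.comp hshift).intervalIntegrable _ _)
  rw [parts, endpoints, sub_self, zero_sub, circleAverage_eq_integral_neg_pi_pi _ c R φ,
    ← intervalIntegral.integral_neg, ← intervalIntegral.integral_smul,
    ← intervalIntegral.integral_smul]
  congr 1 with t
  match_scalars
  simp only [coe_algebraMap]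
  field_simp

theorem integral_inv_circleMap_sub_smul_deriv_sub_const [CompleteSpace E] {f : ℂ → E} {f' : ℝ → E}
    (hw : w ∈ ball c R) (hf : ∀ θ, HasDerivAt (fun θ ↦ f (circleMap c R θ)) (f' θ) θ)
    (hf' : Continuous f') (φ : ℝ) (v : E) :
    ∫ t in -Real.pi..Real.pi, (circleMap c R (φ + t) - w)⁻¹ • (f' (φ + t) - v)
      = (Real.pi * I) • circleAverage (fun ζ ↦ (2 * (ζ - c) / (ζ - w) ^ 2) • f ζ) c R := by
  have kernel_mean : ∫ t in -Real.pi..Real.pi, (circleMap c R (φ + t) - w)⁻¹ = 0 := by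
    have := circleAverage_inv_sub_eq_zero hw
    rw [circleAverage_eq_integral_neg_pi_pi _ c R φ] at this
    exact (smul_eq_zero.1 this).resolve_left (by positivity)
  have hshift : Continuous fun t : ℝ ↦ φ + t := continuous_const.add continuous_id
  have hu : Continuous fun t ↦ (circleMap c R (φ + t) - w)⁻¹ :=
    (continuous_inv_circleMap_sub hw).comp hshift
  have hint {g : ℝ → E} (hg : Continuous g) : IntervalIntegrable
      (fun t ↦ (circleMap c R (φ + t) - w)⁻¹ • g t) volume (-Real.pi) Real.pi :=
    (hu.smul hg).intervalIntegrable _ _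
  simp only [smul_sub]
  rw [intervalIntegral.integral_sub (hint (g := fun t ↦ f' (φ + t)) (hf'.comp hshift))
      (hint continuous_const),
    intervalIntegral.integral_smul_const, kernel_mean, zero_smul, sub_zero]
  exact integral_inv_circleMap_sub_smul_deriv hw hf hf' φ

theorem norm_integral_inv_circleMap_sub_smul_le {g : ℝ → E} {α M : ℝ} (hα : 0 < α)
    (hw : w ∈ ball c R) (hg : ∀ t, |t| ≤ Real.pi → ‖g t‖ ≤ M * |t| ^ α) :
    ‖∫ t in -Real.pi..Real.pi, (circleMap c R (arg (w - c) + t) - w)⁻¹ • g t‖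
      ≤ 2 * M * Real.pi ^ (α + 1) / (α * R) := by
  have hpi := Real.pi_pos
  have hR : 0 < R := pos_of_mem_ball hw
  have hM : 0 ≤ M := by
    have := (norm_nonneg _).trans (hg Real.pi (abs_of_pos hpi).le)
    exact nonneg_of_mul_nonneg_left this (by positivity)
  have pointwise (t : ℝ) (ht : |t| ≤ Real.pi) :
      ‖(circleMap c R (arg (w - c) + t) - w)⁻¹ • g t‖ ≤ Real.pi / R * M * |t| ^ (α - 1) := by
    rcases eq_or_ne t 0 with rfl | h0
    · have : g 0 = 0 := by simpa [Real.zero_rpow hα.ne'] using hg 0 ht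
      rw [this, smul_zero, norm_zero]
      positivity
    have ht0 : 0 < |t| := abs_pos.2 h0
    have distance := mul_abs_le_pi_mul_norm_circleMap_arg_add_sub (ball_subset_closedBall hw) ht
    calc ‖(circleMap c R (arg (w - c) + t) - w)⁻¹ • g t‖
      _ = ‖circleMap c R (arg (w - c) + t) - w‖⁻¹ * ‖g t‖ := by rw [norm_smul, norm_inv]
      _ ≤ (R * |t| / Real.pi)⁻¹ * (M * |t| ^ α) := by
        gcongr
        · exact (div_le_iff₀' hpi).2 distance
        · exact hg t ht
      _ = Real.pi / R * M * |t| ^ (α - 1) := by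
        rw [Real.rpow_sub_one ht0.ne']
        field_simp
  calc ‖∫ t in -Real.pi..Real.pi, (circleMap c R (arg (w - c) + t) - w)⁻¹ • g t‖
    _ ≤ ∫ t in -Real.pi..Real.pi, Real.pi / R * M * |t| ^ (α - 1) :=
      intervalIntegral.norm_integral_le_of_norm_le (by linarith)
        (.of_forall fun t ht ↦ pointwise t (abs_le.2 ⟨ht.1.le, ht.2⟩))
        ((intervalIntegrable_abs_rpow (by linarith) _ _).const_mul _)
    _ = 2 * M * Real.pi ^ (α + 1) / (α * R) := by
      rw [intervalIntegral.integral_const_mul, integral_abs_rpow_neg_self (by linarith) hpi.le,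
        sub_add_cancel, Real.rpow_add_one hpi.ne']
      field_simp

theorem norm_circleAverage_div_sub_sq_smul_le [CompleteSpace E] {f : ℂ → E} {f' : ℝ → E} {α M : ℝ}
    (hα : 0 < α) (hw : w ∈ ball c R)
    (hf : ∀ θ, HasDerivAt (fun θ ↦ f (circleMap c R θ)) (f' θ) θ)
    (hf' : ∀ s t, ‖f' s - f' t‖ ≤ M * |s - t| ^ α) :
    ‖circleAverage (fun ζ ↦ (2 * (ζ - c) / (ζ - w) ^ 2) • f ζ) c R‖
      ≤ 2 * M * Real.pi ^ α / (α * R) := by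
  have hpi := Real.pi_pos
  have hcont : Continuous f' := continuous_of_dist_le_mul_rpow hα fun s t ↦ by
    simpa only [dist_eq_norm, Real.norm_eq_abs] using hf' s t
  set φ := arg (w - c)
  have bound := norm_integral_inv_circleMap_sub_smul_le (g := fun t ↦ f' (φ + t) - f' φ) hα hw
    fun t _ ↦ by simpa only [add_sub_cancel_left] using hf' (φ + t) φ
  rw [integral_inv_circleMap_sub_smul_deriv_sub_const hw hf hcont, norm_smul, norm_mul, norm_I,
    mul_one, norm_real, Real.norm_of_nonneg hpi.le, Real.rpow_add_one hpi.ne'] at bound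
  refine le_of_mul_le_mul_left (bound.trans_eq ?_) hpi
  ring

end CircleAverage

section Harmonic

variable {f : ℂ → ℝ} {w : ℂ} {R : ℝ}

theorem hasGradientAt_of_harmonicContOnCl (hf : HarmonicContOnCl f (ball 0 R))
    (hw : w ∈ ball 0 R) :
    HasGradientAt f
      (starRingEnd ℂ (circleAverage (fun ζ ↦ (2 * ζ / (ζ - w) ^ 2) • (f ζ : ℂ)) 0 R)) w := by
  have hR : 0 < R := pos_of_mem_ball hw
  have hfc : ContinuousOn f (sphere 0 R) :=
    hf.continuousOn.mono (sphere_subset_closedBall.trans_eq (closure_ball 0 hR.ne').symm)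
  have herglotz : f =ᶠ[𝓝 w] fun z ↦
      reCLM (circleAverage (fun ζ ↦ herglotzRieszKernel 0 z ζ • (f ζ : ℂ)) 0 R) := by
    filter_upwards [isOpen_ball.mem_nhds hw] with z hz
    rw [reCLM_apply, re_circleAverage_herglotzRieszKernel_smul (hfc.circleIntegrable hR.le) hz,
      hf.circleAverage_re_herglotzRieszKernel_smul hz]
  have hderiv := hasDerivAt_circleAverage_herglotzRieszKernel_smul
    ((continuous_ofReal.comp_continuousOn hfc).circleIntegrable hR.le) hw
  refine hasGradientAt_iff_hasFDerivAt.2 (HasFDerivAt.congr_of_eventuallyEq ?_ herglotz)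
  refine (reCLM.hasFDerivAt.comp w (hderiv.hasFDerivAt.restrictScalars ℝ)).congr_fderiv ?_
  ext
  simp [Complex.inner]

theorem norm_gradient_le_of_harmonicContOnCl {f' : ℝ → ℝ} {α M : ℝ} (hα : 0 < α)
    (hf : HarmonicContOnCl f (ball 0 R))
    (hderiv : ∀ θ, HasDerivAt (fun θ ↦ f (circleMap 0 R θ)) (f' θ) θ)
    (hHolder : ∀ s t, |f' s - f' t| ≤ M * |s - t| ^ α) (hw : w ∈ ball 0 R) :
    ‖∇ f w‖ ≤ 2 * M * Real.pi ^ α / (α * R) := by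
  rw [(hasGradientAt_of_harmonicContOnCl hf hw).gradient, RCLike.norm_conj]
  simpa only [sub_zero] using norm_circleAverage_div_sub_sq_smul_le hα hw
    (fun θ ↦ (hderiv θ).ofReal_comp) fun s t ↦ by
      simpa only [← ofReal_sub, norm_real, Real.norm_eq_abs] using hHolder s t

end Harmonic

theorem norm_gradient_comp_linearIsometryEquiv {E F : Type*}
    [NormedAddCommGroup E] [InnerProductSpace ℝ E] [CompleteSpace E]
    [NormedAddCommGroup F] [InnerProductSpace ℝ F] [CompleteSpace F]
    (L : E ≃ₗᵢ[ℝ] F) (f : F → ℝ) (x : E) :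
    ‖∇ (f ∘ L) x‖ = ‖∇ f (L x)‖ := by
  have chain : fderiv ℝ (f ∘ L) x =
      (fderiv ℝ f (L x)).comp L.toContinuousLinearEquiv.toContinuousLinearMap :=
    L.toContinuousLinearEquiv.comp_right_fderiv
  rw [gradient, gradient, LinearIsometryEquiv.norm_map, LinearIsometryEquiv.norm_map, chain]
  exact (fderiv ℝ f (L x)).opNorm_comp_linearIsometryEquiv L

theorem laplacian_comp_linearIsometryEquiv {E F G : Type*}
    [NormedAddCommGroup E] [InnerProductSpace ℝ E] [FiniteDimensional ℝ E]
    [NormedAddCommGroup F] [InnerProductSpace ℝ F] [FiniteDimensional ℝ F]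
    [NormedAddCommGroup G] [NormedSpace ℝ G] (L : E ≃ₗᵢ[ℝ] F) (f : F → G) (x : E) :
    Laplacian.laplacian (f ∘ L) x = Laplacian.laplacian f (L x) := by
  have chain : iteratedFDeriv ℝ 2 (f ∘ L) x
      = (iteratedFDeriv ℝ 2 f (L x)).compContinuousLinearMap fun _ ↦ L.toContinuousLinearEquiv := by
    simp only [← iteratedFDerivWithin_univ]
    exact L.toContinuousLinearEquiv.iteratedFDerivWithin_comp_right f uniqueDiffOn_univ
      (Set.mem_univ _) 2
  let b := stdOrthonormalBasis ℝ E
  rw [laplacian_eq_iteratedFDeriv_orthonormalBasis _ b,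
    laplacian_eq_iteratedFDeriv_orthonormalBasis _ (b.map L)]
  refine Finset.sum_congr rfl fun i _ ↦ ?_
  rw [chain, ContinuousMultilinearMap.compContinuousLinearMap_apply]
  congr 1 with j
  fin_cases j <;> rfl

section Plane

variable {Φ : EuclideanSpace ℝ (Fin 2) → ℝ}

theorem laplacian2_eq_laplacian {x : EuclideanSpace ℝ (Fin 2)} (hΦ : ContDiffAt ℝ 2 Φ x) :
    laplacian2 Φ x = Laplacian.laplacian Φ x := by
  have hdiff : DifferentiableAt ℝ (fderiv ℝ Φ) x :=
    (hΦ.fderiv_right (m := 1) (by norm_num)).differentiableAt one_ne_zero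
  rw [laplacian_eq_iteratedFDeriv_orthonormalBasis _ (EuclideanSpace.basisFun (Fin 2) ℝ)]
  refine Finset.sum_congr rfl fun i _ ↦ ?_
  rw [iteratedFDeriv_two_apply, fderiv_clm_apply hdiff (differentiableAt_const _)]
  simp

theorem orthonormalBasisOneI_repr_circleMap (θ : ℝ) :
    orthonormalBasisOneI.repr (circleMap 0 1 θ) = circlePoint θ := by
  ext i
  fin_cases i <;> simp [circlePoint, circleMap, exp_ofReal_mul_I_re, exp_ofReal_mul_I_im]

theorem harmonicContOnCl_comp_orthonormalBasisOneI_repr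
    (hcont : ContinuousOn Φ {x | ‖x‖ ≤ 1}) (hcd : ContDiffOn ℝ 2 Φ {x | ‖x‖ < 1})
    (hlap : ∀ x, ‖x‖ < 1 → laplacian2 Φ x = 0) :
    HarmonicContOnCl (Φ ∘ orthonormalBasisOneI.repr) (ball 0 1) := by
  have hcdAt {x : EuclideanSpace ℝ (Fin 2)} (hx : ‖x‖ < 1) : ContDiffAt ℝ 2 Φ x :=
    hcd.contDiffAt ((isOpen_lt continuous_norm continuous_const).mem_nhds hx)
  have hmem {z : ℂ} (hz : z ∈ ball 0 1) : ‖orthonormalBasisOneI.repr z‖ < 1 := by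
    rwa [LinearIsometryEquiv.norm_map, ← mem_ball_zero_iff]
  refine .mk_ball ?_ (hcont.comp (LinearIsometryEquiv.continuous _).continuousOn fun z hz ↦ ?_)
  · refine fun z hz ↦ ⟨(hcdAt (hmem hz)).comp z (LinearIsometryEquiv.contDiff _).contDiffAt, ?_⟩
    filter_upwards [isOpen_ball.mem_nhds hz] with y hy
    rw [laplacian_comp_linearIsometryEquiv, ← laplacian2_eq_laplacian (hcdAt (hmem hy)),
      hlap _ (hmem hy), Pi.zero_apply]
  · rwa [Set.mem_ofPred_eq, LinearIsometryEquiv.norm_map, ← mem_closedBall_zero_iff]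

end Plane

theorem gradient_bound_for_harmonic_extension_general {α M : ℝ} (hα : 0 < α) {ψ ψ' : ℝ → ℝ}
    {Φ : EuclideanSpace ℝ (Fin 2) → ℝ} (hψ : ∀ t, HasDerivAt ψ (ψ' t) t)
    (hHolder : ∀ s t, |ψ' s - ψ' t| ≤ M * |s - t| ^ α)
    (hcont : ContinuousOn Φ {x | ‖x‖ ≤ 1}) (hcd : ContDiffOn ℝ 2 Φ {x | ‖x‖ < 1})
    (hlap : ∀ x, ‖x‖ < 1 → laplacian2 Φ x = 0) (hbd : ∀ θ, Φ (circlePoint θ) = ψ θ)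
    {x : EuclideanSpace ℝ (Fin 2)} (hx : ‖x‖ < 1) :
    ‖∇ Φ x‖ ≤ 2 * M * Real.pi ^ α / α := by
  obtain ⟨w, rfl⟩ := orthonormalBasisOneI.repr.surjective x
  have hw : w ∈ ball 0 1 := by
    rwa [mem_ball_zero_iff, ← LinearIsometryEquiv.norm_map orthonormalBasisOneI.repr]
  have hboundary (θ : ℝ) : (Φ ∘ orthonormalBasisOneI.repr) (circleMap 0 1 θ) = ψ θ := by
    rw [Function.comp_apply, orthonormalBasisOneI_repr_circleMap, hbd]
  rw [← norm_gradient_comp_linearIsometryEquiv]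
  simpa only [mul_one] using norm_gradient_le_of_harmonicContOnCl hα
    (harmonicContOnCl_comp_orthonormalBasisOneI_repr hcont hcd hlap)
    (by simpa only [hboundary] using hψ) hHolder hw

/-- The gradient of the harmonic extension of `C^{1,α}` boundary data is uniformly bounded
on the unit disk, with a constant depending only on `α`, `‖ψ‖_∞`, `‖ψ′‖_∞` and the
`α`-Hölder seminorm of `ψ′`. -/
theorem gradient_bound_for_harmonic_extension
    (α : ℝ) (hα : 0 < α) (hα1 : α < 1) (M₀ M₁ M₂ : ℝ) :
    ∃ C > 0, ∀ (ψ : ℝ → ℝ) (Φ : EuclideanSpace ℝ (Fin 2) → ℝ),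
      Function.Periodic ψ (2 * Real.pi) →
      ContDiff ℝ 1 ψ →
      (∀ t : ℝ, |ψ t| ≤ M₀) →
      (∀ t : ℝ, |deriv ψ t| ≤ M₁) →
      (∀ s t : ℝ, |deriv ψ s - deriv ψ t| ≤ M₂ * |s - t| ^ α) →
      ContinuousOn Φ {x : EuclideanSpace ℝ (Fin 2) | ‖x‖ ≤ 1} →
      ContDiffOn ℝ 2 Φ {x : EuclideanSpace ℝ (Fin 2) | ‖x‖ < 1} →
      (∀ x : EuclideanSpace ℝ (Fin 2), ‖x‖ < 1 → laplacian2 Φ x = 0) →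
      (∀ θ : ℝ, Φ (circlePoint θ) = ψ θ) →
      ∀ x : EuclideanSpace ℝ (Fin 2), ‖x‖ < 1 → ‖gradient Φ x‖ ≤ C :=
  ⟨max (2 * M₂ * Real.pi ^ α / α) 1, lt_max_of_lt_right one_pos,
    fun _ _ _ hψ _ _ hHolder hcont hcd hlap hbd _ hx ↦ le_max_of_le_left <|
      gradient_bound_for_harmonic_extension_general hα
        (fun t ↦ (hψ.differentiable one_ne_zero t).hasDerivAt) hHolder hcont hcd hlap hbd hx⟩
end

section
/- Let n ≥ 3 be an integer, Ω = {x ∈ ℝⁿ : ‖x‖ > 1}, and Φ(x) = ‖x‖^{2-n}. For each λ > 0 define v_λ(t,x) = e^{-λt} ∇Φ(x) and p_λ(t,x) = λ e^{-λt} Φ(x) - ½ e^{-2λt} ‖∇Φ(x)‖². Then: (a) for every t ∈ ℝ and x ∈ Ω, (v_λ, p_λ) satisfies the Navier–Stokes equations pointwise, i.e. ∂ₜv_λ + (v_λ·∇)v_λ - Δv_λ = -∇ₓp_λ and divₓ v_λ = 0; (b) all these solutions share the same initial data v_λ(0,·) = ∇Φ, yet v_λ ≠ v_μ for λ ≠ μ;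 (c) for each λ > 0 the kinetic energy t ↦ ∫_Ω ‖v_λ(t,x)‖² dx = e^{-2λt} ∫_Ω ‖∇Φ(x)‖² dx is finite and strictly decreasing on [0, ∞). In particular, there are infinitely many classical solutions of the Navier–Stokes equations on Ω with the same initial data and nonincreasing energy. -/
open MeasureTheory Real
open scoped BigOperators

/-- The Laplacian of a scalar function on `ℝⁿ`, `ΔΦ = Σᵢ ∂²Φ/∂xᵢ²`. -/
noncomputable def laplacian {n : ℕ} (f : EuclideanSpace ℝ (Fin n) → ℝ)
    (x : EuclideanSpace ℝ (Fin n)) : ℝ :=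
  ∑ i : Fin n,
    fderiv ℝ (fun y => fderiv ℝ f y (EuclideanSpace.single i 1)) x (EuclideanSpace.single i 1)

/-- The divergence of a vector field on `ℝⁿ`, `div v = Σᵢ ∂vᵢ/∂xᵢ`. -/
noncomputable def vectorDiv {n : ℕ}
    (v : EuclideanSpace ℝ (Fin n) → EuclideanSpace ℝ (Fin n))
    (x : EuclideanSpace ℝ (Fin n)) : ℝ :=
  ∑ i : Fin n, fderiv ℝ v x (EuclideanSpace.single i 1) i

/-- The componentwise Laplacian of a vector field on `ℝⁿ`. -/
noncomputable def vectorLaplacian {n : ℕ}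
    (v : EuclideanSpace ℝ (Fin n) → EuclideanSpace ℝ (Fin n))
    (x : EuclideanSpace ℝ (Fin n)) : EuclideanSpace ℝ (Fin n) :=
  ∑ i : Fin n, EuclideanSpace.single i (laplacian (fun y => v y i) x)

open scoped Gradient Topology RealInnerProductSpace

/-!
For a harmonic function `Φ`, the field `v = c(t) ∇Φ` is divergence free and has `Δv = c ∇ΔΦ = 0`,
while the symmetry of its Jacobian gives `(v·∇)v = ∇(½‖v‖²)`. The remaining terms of the
Navier–Stokes equations are gradients for every amplitude `c`, so the pressure absorbs them and the
choice of `c` with `c(0) = 1` is free. No boundary condition is imposed on `v` to exclude this.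
-/

section Calculus

lemma fderiv_fderiv_apply_comm {V W : Type*} [NormedAddCommGroup V] [NormedSpace ℝ V]
    [NormedAddCommGroup W] [NormedSpace ℝ W] {f : V → W} {x : V} (hf : ContDiffAt ℝ 2 f x)
    (u w : V) :
    fderiv ℝ (fun y => fderiv ℝ f y u) x w = fderiv ℝ (fun y => fderiv ℝ f y w) x u := by
  have hdiff : DifferentiableAt ℝ (fderiv ℝ f) x :=
    (hf.fderiv_right (m := 1) (by norm_num)).differentiableAt one_ne_zero
  rw [fderiv_clm_apply hdiff (differentiableAt_const u),
    fderiv_clm_apply hdiff (differentiableAt_const w)]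
  simpa using hf.isSymmSndFDerivAt (by simp) w u

variable {F : Type*} [NormedAddCommGroup F] [InnerProductSpace ℝ F] {f : F → ℝ} {x : F}

lemma contDiffAt_norm_rpow {m : WithTop ℕ∞} (a : ℝ) (hx : x ≠ 0) :
    ContDiffAt ℝ m (fun y : F => ‖y‖ ^ a) x :=
  (contDiffAt_norm ℝ hx).rpow_const_of_ne (norm_ne_zero_iff.mpr hx)

lemma hasFDerivAt_norm_rpow_of_ne_zero (a : ℝ) (hx : x ≠ 0) :
    HasFDerivAt (fun y : F => ‖y‖ ^ a) ((a * ‖x‖ ^ (a - 2)) • innerSL ℝ x) x := by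
  have sq_rpow_half (y : F) (b : ℝ) : (‖y‖ ^ 2) ^ (b / 2) = ‖y‖ ^ b := by
    rw [← Real.rpow_natCast_mul (norm_nonneg y)]
    congr 1
    push_cast
    ring
  have h := (hasStrictFDerivAt_norm_sq x).hasFDerivAt.rpow_const (p := a / 2)
    (Or.inl (by positivity))
  simp only [sq_rpow_half, show a / 2 - 1 = (a - 2) / 2 by ring] at h
  refine h.congr_fderiv ?_
  ext z
  simp only [smul_apply, coe_innerSL_apply, nsmul_eq_mul, Nat.cast_ofNat, smul_eq_mul]
  ring

variable [CompleteSpace F]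

lemma gradient_const_smul (c : ℝ) (f : F → ℝ) : ∇ (c • f) = c • ∇ f := by
  ext1 x
  simp [gradient, fderiv_const_smul_field]

lemma contDiffAt_gradient {m : WithTop ℕ∞} (hf : ContDiffAt ℝ (m + 1) f x) :
    ContDiffAt ℝ m (∇ f) x :=
  (InnerProductSpace.toDual ℝ F).symm.contDiff.contDiffAt.comp x hf.fderiv_right_succ

lemma differentiableAt_gradient (hf : ContDiffAt ℝ 2 f x) : DifferentiableAt ℝ (∇ f) x :=
  (contDiffAt_gradient (m := 1) (by norm_num; exact hf)).differentiableAt one_ne_zero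

lemma inner_fderiv_gradient (hf : ContDiffAt ℝ 2 f x) (u w : F) :
    ⟪fderiv ℝ (∇ f) x u, w⟫ = fderiv ℝ (fun y => fderiv ℝ f y w) x u := by
  have hinner : (fun y => fderiv ℝ f y w) = fun y => ⟪∇ f y, w⟫ :=
    funext fun y => inner_gradient_left.symm
  rw [hinner, fderiv_inner_apply ℝ (differentiableAt_gradient hf) (differentiableAt_const w)]
  simp

lemma isSymmetric_fderiv_gradient (hf : ContDiffAt ℝ 2 f x) :
    (fderiv ℝ (∇ f) x : F →ₗ[ℝ] F).IsSymmetric := fun u w => by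
  rw [ContinuousLinearMap.coe_coe, inner_fderiv_gradient hf, fderiv_fderiv_apply_comm hf,
    ← inner_fderiv_gradient hf, real_inner_comm]

lemma hasGradientAt_half_norm_gradient_sq (hf : ContDiffAt ℝ 2 f x) :
    HasGradientAt (fun y => 1 / 2 * ‖∇ f y‖ ^ 2) (fderiv ℝ (∇ f) x (∇ f x)) x := by
  rw [hasGradientAt_iff_hasFDerivAt]
  refine ((differentiableAt_gradient hf).hasFDerivAt.norm_sq.const_mul (1 / 2)).congr_fderiv ?_
  ext w
  have hsymm : ⟪∇ f x, fderiv ℝ (∇ f) x w⟫ = ⟪fderiv ℝ (∇ f) x (∇ f x), w⟫ :=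
    (isSymmetric_fderiv_gradient hf (∇ f x) w).symm
  simpa using hsymm

lemma gradient_norm_rpow (a : ℝ) (hx : x ≠ 0) :
    ∇ (fun y : F => ‖y‖ ^ a) x = (a * ‖x‖ ^ (a - 2)) • x := by
  refine HasGradientAt.gradient (hasGradientAt_iff_hasFDerivAt.mpr ?_)
  refine (hasFDerivAt_norm_rpow_of_ne_zero a hx).congr_fderiv ?_
  ext z
  simp

lemma gradient_norm_rpow_ne_zero {a : ℝ} (ha : a ≠ 0) (hx : x ≠ 0) :
    ∇ (fun y : F => ‖y‖ ^ a) x ≠ 0 := by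
  rw [gradient_norm_rpow a hx]
  have := norm_pos_iff.mpr hx
  exact smul_ne_zero (by positivity) hx

lemma norm_gradient_norm_rpow (a : ℝ) (hx : x ≠ 0) :
    ‖∇ (fun y : F => ‖y‖ ^ a) x‖ = |a| * ‖x‖ ^ (a - 1) := by
  rw [gradient_norm_rpow a hx, norm_smul, norm_mul, Real.norm_eq_abs, mul_assoc,
    Real.norm_of_nonneg (by positivity), ← Real.rpow_add_one (norm_ne_zero_iff.mpr hx)]
  ring_nf

end Calculus

section VectorCalculus

variable {n : ℕ} {f : EuclideanSpace ℝ (Fin n) → ℝ} {x : EuclideanSpace ℝ (Fin n)}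

lemma gradient_apply (f : EuclideanSpace ℝ (Fin n) → ℝ) (x : EuclideanSpace ℝ (Fin n))
    (i : Fin n) : ∇ f x i = fderiv ℝ f x (EuclideanSpace.single i 1) := by
  rw [← inner_gradient_left, EuclideanSpace.inner_single_right]
  simp

lemma vectorLaplacian_apply (v : EuclideanSpace ℝ (Fin n) → EuclideanSpace ℝ (Fin n))
    (x : EuclideanSpace ℝ (Fin n)) (i : Fin n) :
    vectorLaplacian v x i = laplacian (fun y => v y i) x := by
  simp [vectorLaplacian, Pi.single_apply]

lemma laplacian_const_smul (c : ℝ) (f : EuclideanSpace ℝ (Fin n) → ℝ) :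
    laplacian (c • f) = c • laplacian f := by
  have hsecond (u : EuclideanSpace ℝ (Fin n)) :
      fderiv ℝ (fun y => c • fderiv ℝ f y u) = c • fderiv ℝ (fun y => fderiv ℝ f y u) :=
    fderiv_const_smul_field c
  ext x
  simp only [laplacian, fderiv_const_smul_field, Pi.smul_apply, smul_apply, hsecond,
    Finset.smul_sum]

lemma laplacian_fderiv_apply (hf : ContDiffAt ℝ 3 f x) (u : EuclideanSpace ℝ (Fin n)) :
    laplacian (fun y => fderiv ℝ f y u) x = fderiv ℝ (laplacian f) x u := by
  have hf' (w) : ContDiffAt ℝ 2 (fun y => fderiv ℝ f y w) x :=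
    (hf.fderiv_right (by norm_num)).clm_apply contDiffAt_const
  have hcomm (w) : (fun y => fderiv ℝ (fun z => fderiv ℝ f z u) y w) =ᶠ[𝓝 x]
      fun y => fderiv ℝ (fun z => fderiv ℝ f z w) y u := by
    filter_upwards [hf.eventually (by simp)] with y hy
    exact fderiv_fderiv_apply_comm (hy.of_le (by norm_num)) u w
  have hdiff (w) : DifferentiableAt ℝ (fun y => fderiv ℝ (fun z => fderiv ℝ f z w) y w) x :=
    ((hf' w).fderiv_right (m := 1) (by norm_num)).clm_apply contDiffAt_const
      |>.differentiableAt one_ne_zero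
  unfold laplacian
  rw [fderiv_fun_sum fun i _ => hdiff _, sum_apply]
  refine Finset.sum_congr rfl fun i _ => ?_
  rw [(hcomm _).fderiv_eq, fderiv_fderiv_apply_comm (hf' _)]

lemma vectorLaplacian_gradient (hf : ContDiffAt ℝ 3 f x) :
    vectorLaplacian (∇ f) x = ∇ (laplacian f) x := by
  ext i
  simp_rw [vectorLaplacian_apply, gradient_apply]
  exact laplacian_fderiv_apply hf _

lemma vectorDiv_gradient (hf : ContDiffAt ℝ 2 f x) : vectorDiv (∇ f) x = laplacian f x := by
  refine Finset.sum_congr rfl fun i _ => ?_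
  rw [← inner_fderiv_gradient hf, EuclideanSpace.inner_single_right]
  simp

lemma laplacian_norm_rpow (a : ℝ) (hx : x ≠ 0) :
    laplacian (fun y => ‖y‖ ^ a) x = a * (a + n - 2) * ‖x‖ ^ (a - 2) := by
  have hpartial (i : Fin n) : (fun y : EuclideanSpace ℝ (Fin n) =>
      fderiv ℝ (fun z => ‖z‖ ^ a) y (EuclideanSpace.single i 1)) =ᶠ[𝓝 x]
        fun y => a * (‖y‖ ^ (a - 2) * y i) := by
    filter_upwards [isOpen_ne.mem_nhds hx] with y hy
    rw [← gradient_apply, gradient_norm_rpow a hy]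
    simp [mul_assoc]
  have hsecond (i : Fin n) :
      fderiv ℝ (fun y : EuclideanSpace ℝ (Fin n) => a * (‖y‖ ^ (a - 2) * y i)) x
        (EuclideanSpace.single i 1) =
      a * (‖x‖ ^ (a - 2) + (a - 2) * ‖x‖ ^ (a - 2 - 2) * x i ^ 2) := by
    have hcoord : HasFDerivAt (fun y : EuclideanSpace ℝ (Fin n) => y i)
        (EuclideanSpace.proj (𝕜 := ℝ) i : EuclideanSpace ℝ (Fin n) →L[ℝ] ℝ) x :=
      (EuclideanSpace.proj (𝕜 := ℝ) i).hasFDerivAt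
    rw [(((hasFDerivAt_norm_rpow_of_ne_zero (a - 2) hx).fun_mul hcoord).const_mul a).fderiv]
    simp only [smul_add, add_apply, smul_apply, PiLp.proj_apply, PiLp.single_eq_same, smul_eq_mul,
      mul_one, coe_innerSL_apply, EuclideanSpace.inner_single_right, ringHom_apply, one_mul]
    ring
  have hpow : ‖x‖ ^ (a - 2 - 2) * ‖x‖ ^ 2 = ‖x‖ ^ (a - 2) := by
    rw [← Real.rpow_add_natCast (norm_ne_zero_iff.mpr hx)]
    norm_num
  calc laplacian (fun y => ‖y‖ ^ a) x
      = ∑ i, a * (‖x‖ ^ (a - 2) + (a - 2) * ‖x‖ ^ (a - 2 - 2) * x i ^ 2) :=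
        Finset.sum_congr rfl fun i _ => by rw [(hpartial i).fderiv_eq, hsecond]
    _ = a * (n * ‖x‖ ^ (a - 2) + (a - 2) * (‖x‖ ^ (a - 2 - 2) * ‖x‖ ^ 2)) := by
        rw [← Finset.mul_sum, Finset.sum_add_distrib, ← Finset.mul_sum,
          ← EuclideanSpace.real_norm_sq_eq]
        simp [mul_assoc]
    _ = a * (a + n - 2) * ‖x‖ ^ (a - 2) := by rw [hpow]; ring

lemma laplacian_norm_rpow_two_sub (hx : x ≠ 0) :
    laplacian (fun y => ‖y‖ ^ ((2 : ℝ) - n)) x = 0 := by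
  rw [laplacian_norm_rpow _ hx]
  ring

end VectorCalculus

section PotentialFlow

variable {n : ℕ} {f : EuclideanSpace ℝ (Fin n) → ℝ} {x : EuclideanSpace ℝ (Fin n)}

lemma vectorLaplacian_gradient_eq_zero (hf : ContDiffAt ℝ 3 f x)
    (hharm : laplacian f =ᶠ[𝓝 x] 0) : vectorLaplacian (∇ f) x = 0 := by
  have hzero : laplacian f =ᶠ[𝓝 x] fun _ => 0 := hharm
  rw [vectorLaplacian_gradient hf, hzero.gradient_eq, gradient_fun_const]

-- Bernoulli's law for the time-dependent potential `c t • f`.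
lemma navierStokes_of_potential (hf : ContDiffAt ℝ 3 f x) (hharm : laplacian f =ᶠ[𝓝 x] 0)
    {c : ℝ → ℝ} {c' t : ℝ} (hc : HasDerivAt c c' t) :
    deriv (fun s => c s • ∇ f x) t + fderiv ℝ (c t • ∇ f) x (c t • ∇ f x)
        - vectorLaplacian (c t • ∇ f) x =
      -∇ (fun y => -c' * f y - 1 / 2 * ‖c t • ∇ f y‖ ^ 2) x ∧
    vectorDiv (c t • ∇ f) x = 0 := by
  have hg : ContDiffAt ℝ 3 (c t • f) x := contDiffAt_const.smul hf
  have hg₂ : ContDiffAt ℝ 2 (c t • f) x := hg.of_le (by norm_num)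
  have hgharm : laplacian (c t • f) =ᶠ[𝓝 x] 0 := by
    filter_upwards [hharm] with y hy
    simp [laplacian_const_smul, hy]
  have hdiv := vectorDiv_gradient hg₂
  have hviscous := vectorLaplacian_gradient_eq_zero hg hgharm
  have hconvective := hasGradientAt_half_norm_gradient_sq hg₂
  rw [gradient_const_smul] at hdiv hviscous hconvective
  refine ⟨?_, hdiv.trans hgharm.self_of_nhds⟩
  have hpressure : HasGradientAt (fun y => -c' * f y - 1 / 2 * ‖c t • ∇ f y‖ ^ 2)
      (-c' • ∇ f x - fderiv ℝ (c t • ∇ f) x (c t • ∇ f x)) x := by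
    have hpotential := (hf.differentiableAt (by norm_num)).hasGradientAt
    rw [hasGradientAt_iff_hasFDerivAt] at hpotential hconvective ⊢
    refine ((hpotential.const_mul (-c')).sub hconvective).congr_fderiv ?_
    simp
  rw [(hc.smul_const _).deriv, hviscous, hpressure.gradient]
  module

end PotentialFlow

section Energy

lemma setIntegral_pos_of_continuousOn {X : Type*} [TopologicalSpace X] [MeasurableSpace X]
    [OpensMeasurableSpace X] {μ : Measure X} [μ.IsOpenPosMeasure] {U : Set X} {f : X → ℝ}
    (hU : IsOpen U) (hf : ContinuousOn f U) (hint : IntegrableOn f U μ)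
    (hnonneg : ∀ x ∈ U, 0 ≤ f x) (hne : ∃ x ∈ U, f x ≠ 0) : 0 < ∫ x in U, f x ∂μ := by
  rw [setIntegral_pos_iff_support_of_nonneg_ae
    (ae_restrict_of_forall_mem hU.measurableSet hnonneg) hint, Set.inter_comm]
  obtain ⟨x, hxU, hx⟩ := hne
  exact (hf.isOpen_inter_preimage hU isOpen_ne).measure_pos μ ⟨x, hxU, hx⟩

lemma setIntegral_norm_gradient_sq_pos {F : Type*} [NormedAddCommGroup F] [InnerProductSpace ℝ F]
    [CompleteSpace F] [MeasurableSpace F] [OpensMeasurableSpace F] {μ : Measure F}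
    [μ.IsOpenPosMeasure] {U : Set F} {f : F → ℝ} (hU : IsOpen U) (hf : ContDiffOn ℝ 1 f U)
    (hint : IntegrableOn (fun x => ‖∇ f x‖ ^ 2) U μ) (hne : ∃ x ∈ U, ∇ f x ≠ 0) :
    0 < ∫ x in U, ‖∇ f x‖ ^ 2 ∂μ := by
  have hcont : ContinuousOn (∇ f) U := fun x hx =>
    (contDiffAt_gradient (m := 0) (by simpa using hf.contDiffAt (hU.mem_nhds hx))).continuousAt
      |>.continuousWithinAt
  refine setIntegral_pos_of_continuousOn hU (hcont.norm.pow 2) hint (fun x _ => sq_nonneg _) ?_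
  simpa using hne

lemma integrableOn_norm_rpow_of_lt {E : Type*} [NormedAddCommGroup E] [NormedSpace ℝ E]
    [FiniteDimensional ℝ E] [Nontrivial E] [MeasurableSpace E] [BorelSpace E] (μ : Measure E)
    [μ.IsAddHaarMeasure] {r s : ℝ} (hr : 0 < r) (hs : s < -Module.finrank ℝ E) :
    IntegrableOn (fun x : E => ‖x‖ ^ s) {x | r < ‖x‖} μ := by
  have hmeas : MeasurableSet {x : E | r < ‖x‖} := measurableSet_lt measurable_const measurable_norm
  have hradial : IntegrableOn (fun y : ℝ => y ^ (Module.finrank ℝ E - 1) • y ^ s) (Set.Ioi r) := by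
    have hexp : (Module.finrank ℝ E - 1 + s : ℝ) < -1 := by linarith
    refine (integrableOn_Ioi_rpow_of_lt hexp hr).congr_fun (fun y hy => ?_) measurableSet_Ioi
    have hy0 : 0 < y := hr.trans hy
    rw [smul_eq_mul, ← Real.rpow_natCast, ← Real.rpow_add hy0, Nat.cast_pred Module.finrank_pos]
  rw [← integrable_indicator_iff hmeas]
  refine (integrable_fun_norm_addHaar μ (f := (Set.Ioi r).indicator (· ^ s))).mpr ?_
  refine ((integrable_indicator_iff measurableSet_Ioi).mpr hradial).integrableOn.congr_fun
    (fun y _ => ?_) measurableSet_Ioi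
  simp only [Set.indicator_smul_apply]

lemma integrableOn_norm_gradient_norm_rpow_sq {E : Type*} [NormedAddCommGroup E]
    [InnerProductSpace ℝ E] [FiniteDimensional ℝ E] [Nontrivial E] [MeasurableSpace E]
    [BorelSpace E] (μ : Measure E) [μ.IsAddHaarMeasure] {a r : ℝ} (hr : 0 < r)
    (ha : 2 * (a - 1) < -Module.finrank ℝ E) :
    IntegrableOn (fun x => ‖∇ (fun y : E => ‖y‖ ^ a) x‖ ^ 2) {x | r < ‖x‖} μ := by
  have hpow : IntegrableOn (fun x : E => |a| ^ 2 * ‖x‖ ^ (2 * (a - 1))) {x | r < ‖x‖} μ :=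
    (integrableOn_norm_rpow_of_lt μ hr ha).const_mul _
  refine hpow.congr_fun (fun x hx => ?_) (measurableSet_lt measurable_const measurable_norm)
  dsimp only
  rw [norm_gradient_norm_rpow a (norm_pos_iff.mp (hr.trans hx)), mul_pow,
    ← Real.rpow_mul_natCast (norm_nonneg x), Nat.cast_ofNat, mul_comm (a - 1)]

end Energy

theorem nonunique_navier_stokes_exterior_domain_general {n : ℕ}
    {Ω : Set (EuclideanSpace ℝ (Fin n))} (hΩ : IsOpen Ω)
    {Φ : EuclideanSpace ℝ (Fin n) → ℝ} (hsmooth : ContDiffOn ℝ 3 Φ Ω)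
    (hharm : ∀ x ∈ Ω, laplacian Φ x = 0)
    (hint : IntegrableOn (fun x => ‖∇ Φ x‖ ^ 2) Ω) (hne : ∃ x ∈ Ω, ∇ Φ x ≠ 0)
    {v : ℝ → ℝ → EuclideanSpace ℝ (Fin n) → EuclideanSpace ℝ (Fin n)}
    (hv : ∀ lam t x, v lam t x = exp (-lam * t) • ∇ Φ x)
    {p : ℝ → ℝ → EuclideanSpace ℝ (Fin n) → ℝ}
    (hp : ∀ lam t x, p lam t x =
      lam * exp (-lam * t) * Φ x - 1 / 2 * exp (-2 * lam * t) * ‖∇ Φ x‖ ^ 2) :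
    (∀ lam t, ∀ x ∈ Ω,
      (deriv (fun s => v lam s x) t + fderiv ℝ (v lam t) x (v lam t x)
          - vectorLaplacian (v lam t) x = -∇ (p lam t) x) ∧
      vectorDiv (v lam t) x = 0) ∧
    ((∀ lam x, v lam 0 x = ∇ Φ x) ∧ Function.Injective v) ∧
    (∀ lam,
      (∀ t, IntegrableOn (fun x => ‖v lam t x‖ ^ 2) Ω) ∧
      (∀ t, ∫ x in Ω, ‖v lam t x‖ ^ 2 = exp (-2 * lam * t) * ∫ x in Ω, ‖∇ Φ x‖ ^ 2) ∧
      (0 < lam → StrictAnti fun t => ∫ x in Ω, ‖v lam t x‖ ^ 2)) := by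
  obtain rfl : v = fun lam t x => exp (-lam * t) • ∇ Φ x :=
    funext fun lam => funext fun t => funext (hv lam t)
  have hharm_near : ∀ x ∈ Ω, laplacian Φ =ᶠ[𝓝 x] 0 := fun x hx => by
    filter_upwards [hΩ.mem_nhds hx] using hharm
  have hderiv (lam t : ℝ) : HasDerivAt (fun s => exp (-lam * s)) (-lam * exp (-lam * t)) t := by
    simpa [mul_comm] using ((hasDerivAt_id t).const_mul (-lam)).exp
  have hnorm_sq (lam t : ℝ) (x) :
      ‖exp (-lam * t) • ∇ Φ x‖ ^ 2 = exp (-2 * lam * t) * ‖∇ Φ x‖ ^ 2 := by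
    rw [norm_smul, Real.norm_of_nonneg (exp_pos _).le, mul_pow, ← exp_nat_mul]
    ring_nf
  have hpressure (lam t : ℝ) : p lam t = fun x =>
      -(-lam * exp (-lam * t)) * Φ x - 1 / 2 * ‖exp (-lam * t) • ∇ Φ x‖ ^ 2 := by
    ext x
    rw [hp, hnorm_sq]
    ring
  have hintegral (lam t : ℝ) : ∫ x in Ω, ‖exp (-lam * t) • ∇ Φ x‖ ^ 2 =
      exp (-2 * lam * t) * ∫ x in Ω, ‖∇ Φ x‖ ^ 2 := by
    simp only [hnorm_sq, integral_const_mul]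
  have hpos := setIntegral_norm_gradient_sq_pos hΩ (hsmooth.of_le (by norm_num)) hint hne
  refine ⟨fun lam t x hx => ?_, ⟨fun lam x => by simp, fun lam mu h => ?_⟩, fun lam => ?_⟩
  · have hf := hsmooth.contDiffAt (hΩ.mem_nhds hx)
    rw [hpressure]
    exact navierStokes_of_potential hf (hharm_near x hx) (hderiv lam t)
  · obtain ⟨x, -, hx⟩ := hne
    have := exp_injective (smul_left_injective ℝ hx (congr_fun (congr_fun h 1) x))
    linarith
  · refine ⟨fun t => ?_, hintegral lam, fun hlam s t hst => ?_⟩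
    · simp only [hnorm_sq]
      exact hint.const_mul _
    · simp only [hintegral]
      exact mul_lt_mul_of_pos_right (exp_lt_exp.mpr (by nlinarith)) hpos

/-- On the exterior domain `Ω = {‖x‖ > 1} ⊆ ℝⁿ`, `n ≥ 3`, with `Φ(x) = ‖x‖^(2-n)`, the
fields `v_λ(t,x) = e^{-λt}∇Φ(x)`, `p_λ(t,x) = λe^{-λt}Φ(x) - ½e^{-2λt}‖∇Φ(x)‖²` give
infinitely many classical Navier–Stokes solutions with the same initial data `∇Φ` and
finite, strictly decreasing kinetic energy `e^{-2λt}∫_Ω ‖∇Φ‖²`. -/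
theorem nonunique_navier_stokes_exterior_domain {n : ℕ} (hn : 3 ≤ n)
    (Ω : Set (EuclideanSpace ℝ (Fin n)))
    (hΩ : Ω = {x : EuclideanSpace ℝ (Fin n) | 1 < ‖x‖})
    (Φ : EuclideanSpace ℝ (Fin n) → ℝ)
    (hΦdef : ∀ x, Φ x = ‖x‖ ^ ((2 : ℝ) - n))
    (v : ℝ → ℝ → EuclideanSpace ℝ (Fin n) → EuclideanSpace ℝ (Fin n))
    (hv : ∀ lam t x, v lam t x = Real.exp (-lam * t) • gradient Φ x)
    (p : ℝ → ℝ → EuclideanSpace ℝ (Fin n) → ℝ)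
    (hp : ∀ lam t x, p lam t x =
      lam * Real.exp (-lam * t) * Φ x
        - (1 / 2 : ℝ) * Real.exp (-2 * lam * t) * ‖gradient Φ x‖ ^ 2) :
    -- (a) each `(v_λ, p_λ)` solves the Navier–Stokes equations pointwise on `ℝ × Ω`
    (∀ lam : ℝ, 0 < lam → ∀ t : ℝ, ∀ x ∈ Ω,
      (deriv (fun s => v lam s x) t + fderiv ℝ (v lam t) x (v lam t x)
          - vectorLaplacian (v lam t) x = - gradient (p lam t) x) ∧
      vectorDiv (v lam t) x = 0) ∧
    -- (b) common initial data, yet pairwise distinct solutions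
    ((∀ lam : ℝ, 0 < lam → ∀ x, v lam 0 x = gradient Φ x) ∧
      (∀ lam mu : ℝ, 0 < lam → 0 < mu → lam ≠ mu → v lam ≠ v mu)) ∧
    -- (c) finite kinetic energy, equal to `e^{-2λt}∫_Ω ‖∇Φ‖²`, strictly decreasing in time
    (∀ lam : ℝ, 0 < lam →
      (∀ t : ℝ, IntegrableOn (fun x => ‖v lam t x‖ ^ 2) Ω volume) ∧
      (∀ t : ℝ, (∫ x in Ω, ‖v lam t x‖ ^ 2)
        = Real.exp (-2 * lam * t) * ∫ x in Ω, ‖gradient Φ x‖ ^ 2) ∧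
      StrictAntiOn (fun t => ∫ x in Ω, ‖v lam t x‖ ^ 2) (Set.Ici (0 : ℝ))) := by
  have : NeZero n := ⟨by omega⟩
  have hn' : (3 : ℝ) ≤ n := by exact_mod_cast hn
  obtain rfl : Φ = fun x => ‖x‖ ^ ((2 : ℝ) - n) := funext hΦdef
  subst hΩ
  have hne_zero : ∀ x : EuclideanSpace ℝ (Fin n), 1 < ‖x‖ → x ≠ 0 := fun x hx =>
    norm_pos_iff.mp (one_pos.trans hx)
  have hint := integrableOn_norm_gradient_norm_rpow_sq (E := EuclideanSpace ℝ (Fin n)) volume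
    (a := 2 - n) one_pos (by rw [finrank_euclideanSpace_fin]; linarith)
  obtain ⟨x₀, hx₀⟩ := NormedSpace.exists_lt_norm ℝ (EuclideanSpace ℝ (Fin n)) 1
  have hgrad := gradient_norm_rpow_ne_zero (by linarith : (2 : ℝ) - n ≠ 0) (hne_zero x₀ hx₀)
  obtain ⟨hNS, ⟨hinit, hinj⟩, henergy⟩ := nonunique_navier_stokes_exterior_domain_general
    (isOpen_lt continuous_const continuous_norm)
    (fun x hx => (contDiffAt_norm_rpow _ (hne_zero x hx)).contDiffWithinAt)
    (fun x hx => laplacian_norm_rpow_two_sub (hne_zero x hx)) hint ⟨x₀, hx₀, hgrad⟩ hv hp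
  exact ⟨fun lam _ => hNS lam, ⟨fun lam _ => hinit lam, fun _ _ _ _ => hinj.ne⟩,
    fun lam hlam => ⟨(henergy lam).1, (henergy lam).2.1, ((henergy lam).2.2 hlam).strictAntiOn _⟩⟩
end
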